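/- Let S, V, W be distinct states of a medium and suppose V = Sm, W = Vn, and S = Wτ for concise messages m and n and a token τ. Then τ ∉ C(n) and τ ∉ C(m), and exactly one of the following holds: (a) τ̃ ∈ C(m), the message nτ is concise for V, C(nτ) = C(m̃) (where m̃ is the reverse of m), and ℓ(m) = ℓ(n) + 1; or (b) τ̃ ∈ C(n), the message τm is concise for W, C(τm) = C(ñ) (where ñ is the reverse of n), and ℓ(n) = ℓ(m) + 1. In either case |ℓ(m) − ℓ(n)| = 1. -/

import Mathlib

open scoped Classical symmDiff

universe u

namespace Media

variable {S : Type u}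

/-- The state obtained by applying the message (string of tokens) `m` to the state `s`. -/
def apply (s : S) (m : List (S → S)) : S :=
  m.foldl (fun x τ => τ x) s

/-- The sequence of states `S₀ = s, S₁, …, Sₙ` produced by the message `m` from the state `s`. -/
def produced (s : S) (m : List (S → S)) : List S :=
  m.scanl (fun x τ => τ x) s

/-- `τ'` is a reverse of the token `τ`. -/
def IsReverse (τ τ' : S → S) : Prop :=
  ∀ P Q : S, P ≠ Q → (τ P = Q ↔ τ' Q = P)

/-- The message `m` is stepwise effective for the state `s`. -/
def StepwiseEffective (s : S) (m : List (S → S)) : Prop :=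
  List.Chain' (· ≠ ·) (produced s m)

/-- The message `m` is consistent: it does not contain both a token and its reverse. -/
def Consistent (m : List (S → S)) : Prop :=
  ∀ τ ∈ m, ∀ τ' ∈ m, ¬ IsReverse τ τ'

/-- The message `m` is concise for the state `s`. -/
def Concise (s : S) (m : List (S → S)) : Prop :=
  StepwiseEffective s m ∧ Consistent m ∧ m.Nodup

/-- The message `m` is vacuous: its indices can be partitioned into pairs of
mutually reverse tokens. -/
def Vacuous (m : List (S → S)) : Prop :=
  ∃ f : Fin m.length → Fin m.length, Function.Involutive f ∧
    (∀ i, f i ≠ i) ∧ ∀ i, IsReverse (m.get i) (m.get (f i))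

/-- The message `m` is closed for the state `s`. -/
def Closed (s : S) (m : List (S → S)) : Prop :=
  StepwiseEffective s m ∧ apply s m = s

/-- `(S, T)` is a medium: a token system satisfying axioms [M1] and [M2]. -/
def IsMedium (T : Set (S → S)) : Prop :=
  (∃ a b : S, a ≠ b) ∧ T.Nonempty ∧ (∀ τ ∈ T, τ ≠ id) ∧
  (∀ P Q : S, P ≠ Q →
    ∃ m : List (S → S), (∀ τ ∈ m, τ ∈ T) ∧ Concise P m ∧ apply P m = Q) ∧
  (∀ (P : S) (m : List (S → S)), (∀ τ ∈ m, τ ∈ T) → Closed P m → Vacuous m)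

end Media

open Media

/-!
Starting at `w`, the triangle closes up into the message `τmn`, so by [M2] the reverse of `τ` occurs
in `m` or in `n`; say in `m`. Cancelling `τ` against it, what remains of `mn` is still matched with
itself by reversal. As `m` and `n` are consistent, no token can be matched inside its own message,
so reversal matches `m` with `nτ`. Every claim about `nτ` is then read off from this matching.
-/

namespace Media

section Rel

open Multiset

variable {α β : Type*}

theorem rel_of_rel_cons_cons {r : α → β → Prop} (hr : Relator.RightUnique r) {a : α} {b : β}
    {s : Multiset α} {t : Multiset β} (hab : r a b) (h : Rel r (a ::ₘ s) (b ::ₘ t)) :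
    Rel r s t := by
  obtain ⟨b', t', hab', hst, heq⟩ := rel_cons_left.1 h
  obtain rfl : b = b' := hr hab hab'
  rwa [(cons_inj_right b).1 heq]

theorem nodup_of_rel {r : α → β → Prop} (hr : Relator.LeftUnique r) {s : Multiset α}
    {t : Multiset β} (h : Rel r s t) (hs : s.Nodup) : t.Nodup := by
  induction h with
  | zero => exact nodup_zero
  | cons hab hst ih =>
    obtain ⟨ha, hs⟩ := nodup_cons.1 hs
    refine nodup_cons.2 ⟨fun hb => ha ?_, ih hs⟩
    obtain ⟨a', ha', ha'b⟩ := exists_mem_of_rel_of_mem (rel_flip.2 hst) hb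
    rwa [hr hab ha'b]

theorem eq_of_add_eq_add_of_disjoint {s t x y : Multiset α} (h : s + t = x + y)
    (hsx : Disjoint s x) (hty : Disjoint t y) : x = t := by
  have count_eq_zero_or {u v : Multiset α} (huv : Disjoint u v) (a : α) :
      u.count a = 0 ∨ v.count a = 0 := by
    rw [count_eq_zero, count_eq_zero]
    exact or_iff_not_imp_left.2 fun ha => disjoint_left.1 huv (not_not.1 ha)
  ext a
  have hcount : s.count a + t.count a = x.count a + y.count a := by
    rw [← count_add, h, count_add]
  have hs := count_eq_zero_or hsx a
  have ht := count_eq_zero_or hty a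
  lia

theorem rel_of_rel_add_self {r : α → α → Prop} {s t : Multiset α}
    (hs : ∀ a ∈ s, ∀ b ∈ s, ¬ r a b) (ht : ∀ a ∈ t, ∀ b ∈ t, ¬ r a b)
    (h : Rel r (s + t) (s + t)) : Rel r s t := by
  have disjoint_image {u v : Multiset α} (hu : ∀ a ∈ u, ∀ b ∈ u, ¬ r a b) (huv : Rel r u v) :
      Disjoint u v := by
    refine disjoint_left.2 fun {b} hbu hbv => ?_
    obtain ⟨a, ha, hab⟩ := exists_mem_of_rel_of_mem (rel_flip.2 huv) hbv
    exact hu a ha b hbu hab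
  obtain ⟨x, y, hsx, hty, heq⟩ := rel_add_left.1 h
  rwa [← eq_of_add_eq_add_of_disjoint heq (disjoint_image hs hsx) (disjoint_image ht hty)]

theorem rel_cons_of_rel_cons_add_self {r : α → α → Prop} [Std.Symm r]
    (hr : Relator.RightUnique r) {a b : α} {s t : Multiset α}
    (hs : ∀ a ∈ s, ∀ b ∈ s, ¬ r a b) (ht : ∀ a ∈ t, ∀ b ∈ t, ¬ r a b)
    (hb : b ∈ s) (hab : r a b) (h : Rel r (a ::ₘ (s + t)) (a ::ₘ (s + t))) :
    Rel r s (a ::ₘ t) := by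
  obtain ⟨s, rfl⟩ := exists_cons_of_mem hb
  have cancel_left : Rel r (b ::ₘ (s + t)) (a ::ₘ (s + t)) := by
    refine rel_of_rel_cons_cons hr hab ?_
    rwa [cons_swap b a, ← cons_add]
  have cancel_both : Rel r (s + t) (s + t) := rel_of_rel_cons_cons hr (symm hab) cancel_left
  refine Rel.cons (symm hab) (rel_of_rel_add_self (fun c hc d hd => ?_) ht cancel_both)
  exact hs c (mem_cons_of_mem hc) d (mem_cons_of_mem hd)

end Rel

variable {s v w : S} {l m n : List (S → S)} {τ ρ : S → S}

theorem IsReverse.symm (h : IsReverse τ ρ) : IsReverse ρ τ :=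
  fun P Q hPQ => (h Q P hPQ.symm).symm

instance : Std.Symm (IsReverse (S := S)) :=
  ⟨fun _ _ => IsReverse.symm⟩

theorem isReverse_rightUnique : Relator.RightUnique (IsReverse (S := S)) := by
  intro τ ρ ρ' h h'
  funext Q
  by_cases hρ : ρ Q = Q
  · by_cases hρ' : ρ' Q = Q
    · rw [hρ, hρ']
    · exact (h _ Q hρ').1 ((h' _ Q hρ').2 rfl)
  · exact ((h' _ Q hρ).1 ((h _ Q hρ).2 rfl)).symm

theorem isReverse_leftUnique : Relator.LeftUnique (IsReverse (S := S)) :=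
  fun _ _ _ h h' => isReverse_rightUnique h.symm h'.symm

theorem apply_cons : apply s (τ :: m) = apply (τ s) m :=
  List.foldl_cons ..

theorem apply_append : apply s (m ++ n) = apply (apply s m) n :=
  List.foldl_append

theorem stepwiseEffective_iff_isChain :
    StepwiseEffective s m ↔ (produced s m).IsChain (· ≠ ·) :=
  Iff.rfl

theorem stepwiseEffective_nil : StepwiseEffective s [] :=
  List.isChain_singleton s

theorem stepwiseEffective_cons :
    StepwiseEffective s (τ :: m) ↔ s ≠ τ s ∧ StepwiseEffective (τ s) m := by
  rw [stepwiseEffective_iff_isChain, stepwiseEffective_iff_isChain, produced, List.scanl_cons]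
  cases m <;> simp [produced]

theorem stepwiseEffective_append :
    StepwiseEffective s (m ++ n) ↔ StepwiseEffective s m ∧ StepwiseEffective (apply s m) n := by
  induction m generalizing s with
  | nil => exact (and_iff_right stepwiseEffective_nil).symm
  | cons τ m ih =>
    rw [List.cons_append, stepwiseEffective_cons, stepwiseEffective_cons, ih, apply_cons,
      and_assoc]

theorem closed_cons_append (hsw : s ≠ w) (hm : StepwiseEffective s m) (hsm : apply s m = v)
    (hn : StepwiseEffective v n) (hvn : apply v n = w) (hwτ : τ w = s) :
    Closed w (τ :: (m ++ n)) := by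
  subst hsm hwτ
  constructor
  · rw [stepwiseEffective_cons, stepwiseEffective_append]
    exact ⟨hsw.symm, hm, hn⟩
  · rw [apply_cons, apply_append, hvn]

/-- Up to the order of its tokens, `n` is the reverse `m̃` of the message `m`. Stating it as a
matching of multisets avoids choosing reverses, which need not exist for arbitrary tokens. -/
def IsReversal (m n : List (S → S)) : Prop :=
  Multiset.Rel IsReverse (m : Multiset (S → S)) n

namespace IsReversal

theorem length_eq (h : IsReversal m n) : m.length = n.length :=
  Multiset.card_eq_card_of_rel h

theorem exists_isReverse_of_mem_left (h : IsReversal m n) (hτ : τ ∈ m) :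
    ∃ σ ∈ n, IsReverse τ σ :=
  Multiset.exists_mem_of_rel_of_mem h hτ

theorem exists_isReverse_of_mem_right (h : IsReversal m n) (hτ : τ ∈ n) :
    ∃ σ ∈ m, IsReverse σ τ :=
  Multiset.exists_mem_of_rel_of_mem (Multiset.rel_flip.2 h) hτ

theorem setOf_mem_eq (h : IsReversal m n) :
    {σ | σ ∈ n} = {σ | ∃ ρ ∈ m, IsReverse ρ σ} := by
  ext σ
  refine ⟨h.exists_isReverse_of_mem_right, ?_⟩
  rintro ⟨ρ, hρ, hρσ⟩
  obtain ⟨σ', hσ', hρσ'⟩ := h.exists_isReverse_of_mem_left hρ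
  rwa [isReverse_rightUnique hρσ hρσ']

theorem nodup (h : IsReversal m n) (hm : m.Nodup) : n.Nodup :=
  Multiset.coe_nodup.1 (nodup_of_rel isReverse_leftUnique h (Multiset.coe_nodup.2 hm))

theorem consistent (h : IsReversal m n) (hm : Consistent m) : Consistent n := by
  intro σ hσ σ' hσ' hσσ'
  obtain ⟨ρ, hρ, hρσ⟩ := h.exists_isReverse_of_mem_right hσ
  obtain ⟨ρ', hρ', hρσ'⟩ := h.exists_isReverse_of_mem_right hσ'
  obtain rfl : ρ = σ' := isReverse_leftUnique hρσ hσσ'.symm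
  obtain rfl : ρ' = σ := isReverse_leftUnique hρσ' hσσ'
  exact hm ρ hρ ρ' hρ' hρσ

theorem concise (h : IsReversal m n) (hm : Concise s m) (hn : StepwiseEffective v n) :
    Concise v n :=
  ⟨hn, h.consistent hm.2.1, h.nodup hm.2.2⟩

theorem perm_right (h : IsReversal m n) (hnl : n.Perm l) : IsReversal m l := by
  rwa [IsReversal, ← Multiset.coe_eq_coe.2 hnl]

theorem cons_of_perm_cons_append (h : IsReversal l l) (hl : l.Perm (τ :: (m ++ n)))
    (hm : Consistent m) (hn : Consistent n) (hρ : ρ ∈ m) (hτρ : IsReverse τ ρ) :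
    IsReversal m (τ :: n) := by
  rw [IsReversal, Multiset.coe_eq_coe.2 hl] at h
  exact rel_cons_of_rel_cons_add_self (s := (m : Multiset (S → S))) (t := (n : Multiset (S → S)))
    isReverse_rightUnique hm hn hρ hτρ h

end IsReversal

theorem Vacuous.isReversal_self (h : Vacuous l) : IsReversal l l := by
  obtain ⟨f, hf, -, hrev⟩ := h
  have map_get : Finset.univ.val.map l.get = l := by
    rw [Fin.univ_val_map, List.ofFn_get]
  have map_get_comp : Finset.univ.val.map (fun i => l.get (f i)) = l := by
    rw [← Function.comp_def, ← Multiset.map_map,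
      (Multiset.bijective_iff_map_univ_eq_univ f).1 hf.bijective, map_get]
  unfold IsReversal
  nth_rw 1 [← map_get]
  rw [← map_get_comp, Multiset.rel_map]
  exact Multiset.rel_refl_of_refl_on fun i _ => hrev i

theorem Vacuous.exists_isReverse_head (h : Vacuous (τ :: l)) : ∃ ρ ∈ l, IsReverse τ ρ := by
  obtain ⟨f, -, hne, hrev⟩ := h
  obtain ⟨j, hj⟩ := Fin.exists_succ_eq.2 (hne 0)
  refine ⟨l.get j, l.get_mem j, ?_⟩
  have head_reverse := hrev 0
  rwa [← hj] at head_reverse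

end Media

theorem concise_triangle_token_general {S : Type*} {T : Set (S → S)}
    (hM2 : ∀ (P : S) (m : List (S → S)), (∀ τ ∈ m, τ ∈ T) → Closed P m → Vacuous m)
    {s v w : S} (hsw : s ≠ w) {m n : List (S → S)} {τ : S → S}
    (hm : ∀ σ ∈ m, σ ∈ T) (hn : ∀ σ ∈ n, σ ∈ T) (hτ : τ ∈ T)
    (hmc : Concise s m) (hsm : apply s m = v)
    (hnc : Concise v n) (hvn : apply v n = w)
    (hwτ : τ w = s) :
    τ ∉ m ∧ τ ∉ n ∧
    Xor
      ((∃ ρ ∈ m, IsReverse τ ρ) ∧ Concise v (n ++ [τ]) ∧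
        {σ | σ ∈ n ++ [τ]} = {σ | ∃ ρ ∈ m, IsReverse ρ σ} ∧
        m.length = n.length + 1)
      ((∃ ρ ∈ n, IsReverse τ ρ) ∧ Concise w (τ :: m) ∧
        {σ | σ ∈ τ :: m} = {σ | ∃ ρ ∈ n, IsReverse ρ σ} ∧
        n.length = m.length + 1) ∧
    ((m.length : ℤ) - (n.length : ℤ)).natAbs = 1 := by
  have hτm : StepwiseEffective w (τ :: m) := by
    rw [stepwiseEffective_cons, hwτ]
    exact ⟨hsw.symm, hmc.1⟩
  have hnτ : StepwiseEffective v (n ++ [τ]) := by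
    rw [stepwiseEffective_append, stepwiseEffective_cons, hvn, hwτ]
    exact ⟨hnc.1, hsw.symm, stepwiseEffective_nil⟩
  have vacuous : Vacuous (τ :: (m ++ n)) :=
    hM2 w _ (by grind) (closed_cons_append hsw hmc.1 hsm hnc.1 hvn hwτ)
  obtain ⟨ρ, hρ, hτρ⟩ := vacuous.exists_isReverse_head
  rcases List.mem_append.1 hρ with hρ | hρ
  · have hrev : IsReversal m (τ :: n) :=
      vacuous.isReversal_self.cons_of_perm_cons_append (.refl _) hmc.2.1 hnc.2.1 hρ hτρ
    have hrev' : IsReversal m (n ++ [τ]) := hrev.perm_right (List.perm_append_singleton τ n).symm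
    have hlen : m.length = n.length + 1 := hrev.length_eq
    refine ⟨fun h => hmc.2.1 τ h ρ hρ hτρ, (hrev.nodup hmc.2.2).notMem, .inl ⟨?_, ?_⟩, by lia⟩
    · exact ⟨⟨ρ, hρ, hτρ⟩, hrev'.concise hmc hnτ, hrev'.setOf_mem_eq, hlen⟩
    · rintro ⟨-, -, -, hlen'⟩
      lia
  · have hrev : IsReversal n (τ :: m) :=
      vacuous.isReversal_self.cons_of_perm_cons_append (List.perm_append_comm.cons τ)
        hnc.2.1 hmc.2.1 hρ hτρ
    have hlen : n.length = m.length + 1 := hrev.length_eq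
    refine ⟨(hrev.nodup hnc.2.2).notMem, fun h => hnc.2.1 τ h ρ hρ hτρ, .inr ⟨?_, ?_⟩, by lia⟩
    · exact ⟨⟨ρ, hρ, hτρ⟩, hrev.concise hnc hτm, hrev.setOf_mem_eq, hlen⟩
    · rintro ⟨-, -, -, hlen'⟩
      lia

/-- Lemma 5.6: let `s, v, w` be distinct states of a medium with `v = s·m`,
`w = v·n`, `s = w·τ` for concise messages `m`, `n` and a token `τ`. Then
`τ ∉ C(n)`, `τ ∉ C(m)`, and exactly one of the following holds:
(a) `τ̃ ∈ C(m)`, `nτ` is concise for `v`, `C(nτ) = C(m̃)` and `ℓ(m) = ℓ(n) + 1`; or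
(b) `τ̃ ∈ C(n)`, `τm` is concise for `w`, `C(τm) = C(ñ)` and `ℓ(n) = ℓ(m) + 1`.
In either case `|ℓ(m) − ℓ(n)| = 1`. -/
theorem concise_triangle_token {S : Type u} {T : Set (S → S)} (hM : IsMedium T)
    (s v w : S) (hsv : s ≠ v) (hvw : v ≠ w) (hsw : s ≠ w)
    (m n : List (S → S)) (τ : S → S)
    (hm : ∀ σ ∈ m, σ ∈ T) (hn : ∀ σ ∈ n, σ ∈ T) (hτ : τ ∈ T)
    (hmc : Concise s m) (hsm : apply s m = v)
    (hnc : Concise v n) (hvn : apply v n = w)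
    (hwτ : τ w = s) :
    τ ∉ m ∧ τ ∉ n ∧
    Xor'
      ((∃ ρ ∈ m, IsReverse τ ρ) ∧ Concise v (n ++ [τ]) ∧
        {σ | σ ∈ n ++ [τ]} = {σ | ∃ ρ ∈ m, IsReverse ρ σ} ∧
        m.length = n.length + 1)
      ((∃ ρ ∈ n, IsReverse τ ρ) ∧ Concise w (τ :: m) ∧
        {σ | σ ∈ τ :: m} = {σ | ∃ ρ ∈ n, IsReverse ρ σ} ∧
        n.length = m.length + 1) ∧
    ((m.length : ℤ) - (n.length : ℤ)).natAbs = 1 := by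
  exact concise_triangle_token_general hM.2.2.2.2 hsw hm hn hτ hmc hsm hnc hvn hwτ
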